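/- Let N ≥ 3 and let μ be a real-valued function on the orthogonal projections of ℂ^N such that (i) μ(E) ≥ 0 for every orthogonal projection E, and (ii) for every finite tuple (E₁,…,E_M) of pairwise commuting orthogonal projections with E₁ + ⋯ + E_M = 1, one has ∑_{i=1}^M μ(E_i) = 1. Then there exists a positive semidefinite Hermitian operator ρ on ℂ^N with tr ρ = 1 such that μ(E) = tr(Eρ) for every orthogonal projection E. -/

import Mathlib

open scoped ComplexOrder

/-- An orthogonal projection on `ℂ^N`: a linear operator `E` with `E² = E = E†`. -/
def IsProjection {N : ℕ} (E : Matrix (Fin N) (Fin N) ℂ) : Prop :=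
  E * E = E ∧ E.IsHermitian

/-!
Let `F` be a frame function of weight zero on a three-dimensional real space, with `|F| ≤ 1` on the
unit sphere, and let `F p` be close to `1`. In the gnomonic chart around `p`, the symmetrization of
`F` by a quarter turn about `p` can hardly increase along the great circles that descend from their
closest point to the pole, nor therefore along outward spirals. If `F p = 1`, this monotonicity and
the frames with two vectors on a common latitude force the symmetrization to be the zonal form
`3 ⟪p, v⟫² - ‖v‖²`; by compactness it is close to that form when `F p` is close to `1`.

A sum of finitely many zonal forms therefore separates the vectors where `F` is close to `1` from
those where it is close to `-1`, and subtracting a small multiple of it shrinks `sup |F|` by a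
factor that does not depend on `F`. Iterating, `F` is a uniform limit of quadratic forms, so it
satisfies the parallelogram law. Over `ℂ` the parallelogram law reduces to real three-dimensional
subspaces, and the Jordan–von Neumann argument turns the frame function into a positive operator.
-/

section FrameFunctions

open Module

variable {𝕜 E : Type*} [RCLike 𝕜] [NormedAddCommGroup E] [InnerProductSpace 𝕜 E]

variable (𝕜) in
/-- A frame function of weight `W`: its values on every orthonormal basis sum to `W`. It is defined
on all vectors, not only on the unit sphere, by homogeneity of degree two. -/
structure IsFrameFunction (F : E → ℝ) (W : ℝ) : Prop where
  map_smul : ∀ (c : 𝕜) (v : E), F (c • v) = ‖c‖ ^ 2 * F v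
  sum_eq : ∀ b : OrthonormalBasis (Fin (finrank 𝕜 E)) 𝕜 E, ∑ i, F (b i) = W

/-- The parallelogram identity, which singles out the quadratic forms among the functions bounded by
a multiple of `‖v‖ ^ 2`. -/
def ParallelogramLaw {V : Type*} [AddCommGroup V] (F : V → ℝ) : Prop :=
  ∀ u v, F (u + v) + F (u - v) = 2 * F u + 2 * F v

namespace IsFrameFunction

variable {F G : E → ℝ} {W W' : ℝ}

theorem map_zero (hF : IsFrameFunction 𝕜 F W) : F 0 = 0 := by
  simpa using hF.map_smul 0 0

theorem map_neg (hF : IsFrameFunction 𝕜 F W) (v : E) : F (-v) = F v := by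
  simpa using hF.map_smul (-1) v

theorem sum_eq_of_orthonormal [FiniteDimensional 𝕜 E] (hF : IsFrameFunction 𝕜 F W) {ι : Type*}
    [Fintype ι] (hι : Fintype.card ι = finrank 𝕜 E) {v : ι → E} (hv : Orthonormal 𝕜 v) :
    ∑ i, F (v i) = W := by
  obtain ⟨b, hb⟩ := Orthonormal.exists_orthonormalBasis_extension_of_card_eq hι.symm (s := .univ)
    (hv.comp _ Subtype.val_injective)
  let e : ι ≃ Fin (finrank 𝕜 E) := Fintype.equivFinOfCardEq hι
  rw [← hF.sum_eq (b.reindex e), ← e.symm.sum_comp]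
  simp [hb]

theorem abs_le_of_forall_norm_eq_one {B : ℝ} (hF : IsFrameFunction 𝕜 F W)
    (hB : ∀ v, ‖v‖ = 1 → |F v| ≤ B) (v : E) : |F v| ≤ B * ‖v‖ ^ 2 := by
  rcases eq_or_ne v 0 with rfl | hv
  · simp [hF.map_zero]
  · have hv0 : ‖v‖ ≠ 0 := norm_ne_zero_iff.2 hv
    have hscale : F v = ‖v‖ ^ 2 * F (((‖v‖⁻¹ : ℝ) : 𝕜) • v) := by
      rw [hF.map_smul, RCLike.norm_ofReal, sq_abs, ← mul_assoc, ← mul_pow, mul_inv_cancel₀ hv0,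
        one_pow, one_mul]
    rw [hscale, abs_mul, abs_of_nonneg (sq_nonneg _), mul_comm]
    gcongr
    exact hB _ (by simp [norm_smul, hv0])

theorem add (hF : IsFrameFunction 𝕜 F W) (hG : IsFrameFunction 𝕜 G W') :
    IsFrameFunction 𝕜 (F + G) (W + W') where
  map_smul c v := by simp only [Pi.add_apply, hF.map_smul, hG.map_smul, mul_add]
  sum_eq b := by
    simp only [Pi.add_apply, Finset.sum_add_distrib, hF.sum_eq b, hG.sum_eq b]

theorem const_smul (hF : IsFrameFunction 𝕜 F W) (c : ℝ) : IsFrameFunction 𝕜 (c • F) (c * W) where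
  map_smul a v := by simp only [Pi.smul_apply, hF.map_smul, smul_eq_mul, mul_left_comm]
  sum_eq b := by
    simp only [Pi.smul_apply, smul_eq_mul, ← Finset.mul_sum, hF.sum_eq b]

theorem sub (hF : IsFrameFunction 𝕜 F W) (hG : IsFrameFunction 𝕜 G W') :
    IsFrameFunction 𝕜 (F - G) (W - W') := by
  simpa [sub_eq_add_neg] using hF.add (hG.const_smul (-1))

end IsFrameFunction

variable (𝕜 E) in
theorem isFrameFunction_norm_sq :
    IsFrameFunction 𝕜 (fun v : E ↦ ‖v‖ ^ 2) (finrank 𝕜 E) where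
  map_smul c v := by rw [norm_smul, mul_pow]
  sum_eq b := by simp

theorem ParallelogramLaw.add {V : Type*} [AddCommGroup V] {F G : V → ℝ} (hF : ParallelogramLaw F)
    (hG : ParallelogramLaw G) : ParallelogramLaw (F + G) := fun u v ↦ by
  simp only [Pi.add_apply]
  linarith [hF u v, hG u v]

theorem ParallelogramLaw.const_smul {V : Type*} [AddCommGroup V] {F : V → ℝ}
    (hF : ParallelogramLaw F) (c : ℝ) : ParallelogramLaw (c • F) := fun u v ↦ by
  simp only [Pi.smul_apply, smul_eq_mul]
  linear_combination c * hF u v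

/-- The value of a degree-two homogeneous `F` at the unit vectors of the line through `v`; it is `0`
for `v = 0`. -/
noncomputable def rayValue {E : Type*} [NormedAddCommGroup E] (F : E → ℝ) (v : E) : ℝ :=
  F v / ‖v‖ ^ 2

theorem abs_rayValue_le {E : Type*} [NormedAddCommGroup E] {F : E → ℝ} {B : ℝ} (hB0 : 0 ≤ B)
    (hB : ∀ v, |F v| ≤ B * ‖v‖ ^ 2) (v : E) : |rayValue F v| ≤ B := by
  rw [rayValue, abs_div, abs_of_nonneg (sq_nonneg ‖v‖)]
  exact div_le_of_le_mul₀ (sq_nonneg _) hB0 (hB v)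

end FrameFunctions

section RealFrames

open Module RealInnerProductSpace

variable {E : Type*} [NormedAddCommGroup E] [InnerProductSpace ℝ E] {F : E → ℝ} {W : ℝ}

theorem parallelogramLaw_norm_sq : ParallelogramLaw fun v : E ↦ ‖v‖ ^ 2 := fun u v ↦ by
  linarith [parallelogram_law_with_norm ℝ u v]

variable (E) in
/-- The space of weight-zero frame functions satisfying the parallelogram law: the traceless
quadratic forms. -/
def quadraticFrameFunctions : Submodule ℝ (E → ℝ) where
  carrier := {Q | IsFrameFunction ℝ Q 0 ∧ ParallelogramLaw Q}
  add_mem' hP hQ := ⟨by simpa using hP.1.add hQ.1, hP.2.add hQ.2⟩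
  zero_mem' := ⟨⟨by simp, by simp⟩, by simp [ParallelogramLaw]⟩
  smul_mem' c Q hQ := ⟨by simpa using hQ.1.const_smul c, hQ.2.const_smul c⟩

/-- The traceless quadratic form invariant under the rotations that fix `p`. -/
noncomputable def zonal (p v : E) : ℝ := finrank ℝ E * ⟪p, v⟫ ^ 2 - ‖v‖ ^ 2

theorem zonal_mem_quadraticFrameFunctions {p : E} (hp : ‖p‖ = 1) :
    zonal p ∈ quadraticFrameFunctions E := by
  refine ⟨⟨fun c v ↦ ?_, fun b ↦ ?_⟩, fun u v ↦ ?_⟩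
  · rw [zonal, zonal, inner_smul_right, norm_smul, Real.norm_eq_abs, mul_pow, mul_pow, sq_abs]
    ring
  · simp only [zonal, Finset.sum_sub_distrib, ← Finset.mul_sum,
      b.sum_sq_inner_left, b.norm_eq_one, hp]
    simp
  · simp only [zonal, inner_add_right, inner_sub_right]
    linear_combination -parallelogram_law_with_norm ℝ u v

theorem abs_zonal_le (hE : finrank ℝ E = 3) {p : E} (hp : ‖p‖ = 1) (v : E) :
    |zonal p v| ≤ 2 * ‖v‖ ^ 2 := by
  have : ⟪p, v⟫ ^ 2 ≤ ‖v‖ ^ 2 := sq_le_sq.2 (by simpa [hp] using abs_real_inner_le_norm p v)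
  rw [zonal, hE, abs_le]
  constructor <;> push_cast <;> nlinarith [sq_nonneg ⟪p, v⟫]

namespace IsFrameFunction

theorem rayValue_smul (hF : IsFrameFunction ℝ F W) {c : ℝ} (hc : c ≠ 0) (v : E) :
    rayValue F (c • v) = rayValue F v := by
  rw [rayValue, rayValue, hF.map_smul, norm_smul, mul_pow, mul_div_mul_left]
  simpa

theorem sum_rayValue [FiniteDimensional ℝ E] (hF : IsFrameFunction ℝ F W) {ι : Type*} [Fintype ι]
    (hι : Fintype.card ι = finrank ℝ E) {v : ι → E} (hv0 : ∀ i, v i ≠ 0)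
    (hv : Pairwise fun i j ↦ ⟪v i, v j⟫ = 0) : ∑ i, rayValue F (v i) = W := by
  rw [← hF.sum_eq_of_orthonormal hι (v := fun i ↦ (‖v i‖⁻¹ : ℝ) • v i)]
  · exact Finset.sum_congr rfl fun i _ ↦ by
      simp [rayValue, hF.map_smul, div_eq_inv_mul]
  · refine ⟨fun i ↦ by simp [norm_smul, hv0 i], fun i j hij ↦ ?_⟩
    simp [inner_smul_left, inner_smul_right, hv hij]

theorem rayValue_add_three (hF : IsFrameFunction ℝ F W) (hE : finrank ℝ E = 3) {u v w : E}
    (hu : u ≠ 0) (hv : v ≠ 0) (hw : w ≠ 0) (huv : ⟪u, v⟫ = 0) (hvw : ⟪v, w⟫ = 0)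
    (huw : ⟪u, w⟫ = 0) : rayValue F u + rayValue F v + rayValue F w = W := by
  have := FiniteDimensional.of_finrank_eq_succ hE
  rw [← hF.sum_rayValue (v := ![u, v, w]) (by simp [hE])]
  · simp [Fin.sum_univ_three]
  · intro i
    fin_cases i <;> simpa
  · intro i j hij
    fin_cases i <;> fin_cases j <;> simp_all [real_inner_comm]

end IsFrameFunction

end RealFrames

section PolarCharts

open Complex Filter RealInnerProductSpace Topology

/-- The functional equations, in the gnomonic chart `u ↦ J u + p` around a unit vector `p` of a
three-dimensional space, of a weight-zero frame function symmetrized by a quarter turn about `p`.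
Vectors `J u + p` and `J v + p` are orthogonal iff `⟪u, v⟫ = -1`; `antipode` comes from the frames
with one vector in the plane orthogonal to `p`. -/
structure IsPolarChart (G : ℂ → ℝ) : Prop where
  triple : ∀ ⦃u v w : ℂ⦄, ⟪u, v⟫ = -1 → ⟪v, w⟫ = -1 → ⟪u, w⟫ = -1 → G u + G v + G w = 0
  antipode : ∀ ⦃u : ℂ⦄, u ≠ 0 → G u + G (-(‖u‖ ^ 2)⁻¹ • u) = G 0 / 2

theorem inner_mul_mul_left (z u v : ℂ) : ⟪z * u, z * v⟫ = ‖z‖ ^ 2 * ⟪u, v⟫ := by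
  rw [Complex.inner, Complex.inner, Complex.sq_norm, Complex.normSq_apply]
  simp only [map_mul, mul_re, mul_im, conj_re, conj_im]
  ring

theorem exists_pow_eq_and_one_le_re {z : ℂ} (hz : 1 < ‖z‖) :
    ∃ (n : ℕ) (w : ℂ), w ^ n = z ∧ 1 ≤ w.re := by
  have hz0 : z ≠ 0 := norm_pos_iff.1 (one_pos.trans hz)
  have hlog : 0 < (log z).re := by simpa [log_re] using Real.log_pos hz
  have hderiv : HasDerivAt (fun t : ℝ ↦ (exp (t * log z)).re) (log z).re 0 := by
    have := ((hasDerivAt_id (0 : ℂ)).mul_const (log z)).cexp.real_of_complex (z := 0)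
    simpa using this
  have hev : ∀ᶠ n : ℕ in atTop, 1 < (exp (((n : ℝ)⁻¹ : ℝ) * log z)).re := by
    have hinv : Tendsto (fun n : ℕ ↦ (n : ℝ)⁻¹) atTop (𝓝[>] 0) :=
      tendsto_inv_atTop_nhdsGT_zero.comp tendsto_natCast_atTop_atTop
    filter_upwards [(hderiv.tendsto_slope_zero_right.comp hinv).eventually_const_lt hlog,
      eventually_gt_atTop 0] with n hn hn0
    have := (pos_iff_pos_of_mul_pos hn).1 (by positivity)
    simpa using this
  obtain ⟨n, hn, hn0⟩ := (hev.and (eventually_ne_atTop 0)).exists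
  refine ⟨n, _, ?_, hn.le⟩
  rw [← exp_nat_mul]
  push_cast
  rw [mul_inv_cancel_left₀ (Nat.cast_ne_zero.2 hn0), exp_log hz0]

namespace IsPolarChart

variable {G : ℂ → ℝ} {B : ℝ}

theorem comp_mul_left (hG : IsPolarChart G) {ζ : ℂ} (hζ : ‖ζ‖ = 1) :
    IsPolarChart fun u ↦ G (ζ * u) where
  triple u v w huv hvw huw := by
    apply hG.triple <;> rwa [inner_mul_mul_left, hζ, one_pow, one_mul]
  antipode u hu := by
    have hζ0 : ζ ≠ 0 := norm_ne_zero_iff.1 (hζ ▸ one_ne_zero)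
    simpa [hζ, mul_left_comm] using hG.antipode (mul_ne_zero hζ0 hu)

theorem lower_bound (hG : IsPolarChart G) (hB : ∀ u, G u ≤ B) {u : ℂ} (hu : u ≠ 0) :
    G 0 / 2 - B ≤ G u := by
  linarith [hG.antipode hu, hB (-(‖u‖ ^ 2)⁻¹ • u)]

theorem apply_mul_one_add_mul_I_le (hG : IsPolarChart G) (hB : ∀ u, G u ≤ B) (u : ℂ) (τ : ℝ) :
    G (u * (1 + τ * I)) ≤ G u + (B - G 0) := by
  rcases eq_or_ne u 0 with rfl | hu
  · simpa using hB 0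
  rcases eq_or_ne τ 0 with rfl | hτ
  · simpa using hB 0
  obtain ⟨s, hs⟩ : ∃ s : ℝ, ‖u‖ ^ 2 * (τ * s) = 1 + ‖u‖ ^ 2 :=
    ⟨(1 + ‖u‖ ^ 2) / (‖u‖ ^ 2 * τ), by field_simp⟩
  have inner_eq (a b : ℂ) : ⟪u * a, u * b⟫ = ‖u‖ ^ 2 * (a.re * b.re + a.im * b.im) := by
    rw [inner_mul_mul_left, Complex.inner]
    simp [mul_comm]
  -- The points `u * (1 + τ * I)` form the great circle whose closest point to the pole `0` is `u`.
  -- It is polar to the antipode of `u`, so it carries the other two vectors of a frame.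
  have frame : G (u * (1 + τ * I)) + G (u * (1 - s * I)) + G (u * (-(‖u‖ ^ 2)⁻¹ : ℝ)) = 0 := by
    apply hG.triple <;> rw [inner_eq]
    · simp only [add_re, sub_re, one_re, re_ofReal_mul, I_re, add_im, sub_im, one_im, im_ofReal_mul,
        I_im]
      linear_combination -hs
    all_goals simp [hu, -ofReal_inv, -ofReal_neg, ofReal_re]
  have opposite : G u + G (u * (-(‖u‖ ^ 2)⁻¹ : ℝ)) = G 0 / 2 := by
    simpa [mul_comm] using hG.antipode hu
  have hv : u * (1 - s * I) ≠ 0 := mul_ne_zero hu fun h ↦ by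
    simpa using congrArg re h
  linarith [hG.lower_bound hB hv]

theorem apply_real_mul_le (hG : IsPolarChart G) (hB : ∀ u, G u ≤ B) (u : ℂ) {k : ℝ} (hk : 1 ≤ k) :
    G (k * u) ≤ G u + 2 * (B - G 0) := by
  have factor : (k * u : ℂ) = u * (1 + √(k - 1) * I) * (1 + (-√(k - 1) : ℝ) * I) := by
    have hsq : (√(k - 1) : ℂ) ^ 2 = k - 1 := by
      exact_mod_cast Real.sq_sqrt (sub_nonneg.2 hk)
    push_cast
    linear_combination u * (√(k - 1) : ℂ) ^ 2 * I_sq - u * hsq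
  rw [factor]
  linarith [hG.apply_mul_one_add_mul_I_le hB (u * (1 + √(k - 1) * I)) (-√(k - 1)),
    hG.apply_mul_one_add_mul_I_le hB u √(k - 1)]

theorem apply_mul_le (hG : IsPolarChart G) (hmax : ∀ u, G u ≤ G 0) (u : ℂ) {w : ℂ}
    (hw : 1 ≤ w.re) : G (u * w) ≤ G u := by
  have hw0 : w.re ≠ 0 := by positivity
  have factor : u * w = w.re * u * (1 + (w.im / w.re : ℝ) * I) := by
    have : (w.re : ℂ) ≠ 0 := mod_cast hw0
    conv_lhs => rw [← re_add_im w]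
    push_cast
    field_simp
  rw [factor]
  linarith [hG.apply_mul_one_add_mul_I_le hmax (w.re * u) (w.im / w.re),
    hG.apply_real_mul_le hmax u hw]

theorem le_of_norm_lt (hG : IsPolarChart G) (hmax : ∀ u, G u ≤ G 0) {u v : ℂ} (hu : u ≠ 0)
    (huv : ‖u‖ < ‖v‖) : G v ≤ G u := by
  have hz : 1 < ‖v / u‖ := by rwa [norm_div, one_lt_div (norm_pos_iff.2 hu)]
  obtain ⟨n, w, hwn, hw⟩ := exists_pow_eq_and_one_le_re hz
  have spiral (m : ℕ) : G (u * w ^ m) ≤ G u := by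
    induction m with
    | zero => simp
    | succ m ih =>
      rw [pow_succ, ← mul_assoc]
      exact (hG.apply_mul_le hmax _ hw).trans ih
  simpa [hwn, mul_div_cancel₀ _ hu] using spiral n

end IsPolarChart

/-- The value `3 cos² θ - 1` of a zonal form on the unit vectors at angle `θ` from its pole, as a
function of `r = tan θ`, the distance to the origin in the gnomonic chart. -/
noncomputable def zonalProfile (r : ℝ) : ℝ := 3 / (1 + r ^ 2) - 1

theorem continuous_zonalProfile : Continuous zonalProfile :=
  .sub (.div₀ (by fun_prop) (by fun_prop) fun r ↦ by positivity) (by fun_prop)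

theorem zonalProfile_zero : zonalProfile 0 = 2 := by norm_num [zonalProfile]

theorem abs_zonalProfile_le (r : ℝ) : |zonalProfile r| ≤ 2 := by
  have hr : 3 / (1 + r ^ 2) ≤ 3 := div_le_self (by norm_num) (by nlinarith)
  have : 0 ≤ 3 / (1 + r ^ 2) := by positivity
  rw [zonalProfile, abs_le]
  constructor <;> linarith

theorem zonalProfile_add_inv {r : ℝ} (hr : r ≠ 0) : zonalProfile r + zonalProfile r⁻¹ = 1 := by
  rw [zonalProfile, zonalProfile]
  field_simp
  ring

theorem exists_frame_on_latitude {ρ : ℝ} (hρ : 1 < ρ) : ∃ w v v' : ℂ,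
    ⟪w, v⟫ = -1 ∧ ⟪v, v'⟫ = -1 ∧ ⟪w, v'⟫ = -1 ∧ ‖v‖ = ρ ∧ ‖v'‖ = ρ ∧
      zonalProfile ‖w‖ + 2 * zonalProfile ρ = 0 := by
  set q := √((ρ ^ 2 - 1) / 2)
  have hq : 0 < q := Real.sqrt_pos.2 (by nlinarith)
  have hqρ : ρ ^ 2 = 1 + 2 * q ^ 2 := by
    rw [Real.sq_sqrt (by nlinarith)]
    ring
  have hsq : √(1 + q ^ 2) ^ 2 = 1 + q ^ 2 := Real.sq_sqrt (by positivity)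
  have norm_eq {z : ℂ} (hre : z.re = -q) (him : z.im ^ 2 = 1 + q ^ 2) : ‖z‖ = ρ := by
    rw [← abs_of_pos (one_pos.trans hρ), ← abs_norm, ← sq_eq_sq_iff_abs_eq_abs, Complex.sq_norm,
      normSq_apply, hre, hqρ]
    linear_combination him
  refine ⟨⟨q⁻¹, 0⟩, ⟨-q, √(1 + q ^ 2)⟩, ⟨-q, -√(1 + q ^ 2)⟩, ?_, ?_, ?_, norm_eq rfl hsq,
    norm_eq rfl (by rw [neg_sq, hsq]), ?_⟩
  · simp [Complex.inner, hq.ne']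
  · simp only [Complex.inner, mul_re, conj_re, conj_im]
    linear_combination -hsq
  · simp [Complex.inner, hq.ne']
  · rw [zonalProfile, zonalProfile, hqρ, Complex.sq_norm, normSq_apply]
    field_simp
    ring

namespace IsPolarChart

variable {G : ℂ → ℝ} {M : ℝ}

theorem exists_add_eq_of_one_lt (hG : IsPolarChart G) {ρ : ℝ} (hρ : 1 < ρ) : ∃ w v v' : ℂ,
    ‖v‖ = ρ ∧ ‖v'‖ = ρ ∧ G v + G v' = 2 * zonalProfile ρ - (G w - zonalProfile ‖w‖) := by
  obtain ⟨w, v, v', hwv, hvv', hwv', hv, hv', hZ⟩ := exists_frame_on_latitude hρ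
  exact ⟨w, v, v', hv, hv', by linarith [hG.triple hwv hvv' hwv']⟩

theorem zonalProfile_sub_le (hG : IsPolarChart G) (hmax : ∀ u, G u ≤ G 0)
    (hM : ∀ u, |G u - zonalProfile ‖u‖| ≤ M) {u : ℂ} (hu : 1 ≤ ‖u‖) :
    zonalProfile ‖u‖ - M / 2 ≤ G u := by
  refine le_of_tendsto (f := fun ρ ↦ zonalProfile ρ - M / 2) (x := 𝓝[>] ‖u‖)
    ((continuous_zonalProfile.sub continuous_const).continuousWithinAt) ?_
  filter_upwards [self_mem_nhdsWithin] with ρ hρ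
  rw [Set.mem_Ioi] at hρ
  have hu0 : u ≠ 0 := norm_pos_iff.1 (one_pos.trans_le hu)
  obtain ⟨w, v, v', hv, hv', hsum⟩ := hG.exists_add_eq_of_one_lt (hu.trans_lt hρ)
  linarith [hG.le_of_norm_lt hmax hu0 (hv ▸ hρ), hG.le_of_norm_lt hmax hu0 (hv' ▸ hρ),
    (abs_le.1 (hM w)).2]

theorem le_zonalProfile_add (hG : IsPolarChart G) (hmax : ∀ u, G u ≤ G 0)
    (hM : ∀ u, |G u - zonalProfile ‖u‖| ≤ M) {u : ℂ} (hu : 1 < ‖u‖) :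
    G u ≤ zonalProfile ‖u‖ + M / 2 := by
  refine ge_of_tendsto (f := fun ρ ↦ zonalProfile ρ + M / 2) (x := 𝓝[<] ‖u‖)
    ((continuous_zonalProfile.add_const _).continuousWithinAt) ?_
  filter_upwards [Ioo_mem_nhdsLT hu] with ρ hρ
  obtain ⟨w, v, v', hv, hv', hsum⟩ := hG.exists_add_eq_of_one_lt hρ.1
  have ne_zero {z : ℂ} (hz : ‖z‖ = ρ) : z ≠ 0 := norm_pos_iff.1 (hz ▸ one_pos.trans hρ.1)
  linarith [hG.le_of_norm_lt hmax (ne_zero hv) (hv ▸ hρ.2),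
    hG.le_of_norm_lt hmax (ne_zero hv') (hv' ▸ hρ.2), (abs_le.1 (hM w)).1]

theorem exists_defect_eq_neg (hG : IsPolarChart G) (h0 : G 0 = 2) {u : ℂ} (hu : u ≠ 0) :
    ∃ v, ‖v‖ = ‖u‖⁻¹ ∧ G v - zonalProfile ‖v‖ = -(G u - zonalProfile ‖u‖) := by
  have hnorm : ‖-(‖u‖ ^ 2)⁻¹ • u‖ = ‖u‖⁻¹ := by
    rw [norm_smul, norm_neg, norm_inv, norm_pow, norm_norm]
    field_simp
  refine ⟨-(‖u‖ ^ 2)⁻¹ • u, hnorm, ?_⟩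
  rw [hnorm]
  linarith [hG.antipode hu, zonalProfile_add_inv (norm_ne_zero_iff.2 hu)]

theorem abs_sub_zonalProfile_le_half (hG : IsPolarChart G) (hmax : ∀ u, G u ≤ G 0) (h0 : G 0 = 2)
    (hM : ∀ u, |G u - zonalProfile ‖u‖| ≤ M) (u : ℂ) : |G u - zonalProfile ‖u‖| ≤ M / 2 := by
  have outside {u : ℂ} (hu : 1 < ‖u‖) : |G u - zonalProfile ‖u‖| ≤ M / 2 :=
    abs_le.2 ⟨by linarith [hG.zonalProfile_sub_le hmax hM hu.le],
      by linarith [hG.le_zonalProfile_add hmax hM hu]⟩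
  rcases eq_or_ne u 0 with rfl | hu0
  · have : 0 ≤ M := (abs_nonneg _).trans (hM 0)
    simpa [h0, zonalProfile_zero] using div_nonneg this zero_le_two
  obtain ⟨v, hv, hD⟩ := hG.exists_defect_eq_neg h0 hu0
  rcases lt_trichotomy ‖u‖ 1 with hu | hu | hu
  · rw [← abs_neg, ← hD]
    exact outside (hv ▸ (one_lt_inv₀ (norm_pos_iff.2 hu0)).2 hu)
  · have := hG.zonalProfile_sub_le hmax hM hu.ge
    have := hG.zonalProfile_sub_le hmax hM (u := v) (by simp [hv, hu])
    exact abs_le.2 ⟨by linarith, by linarith⟩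
  · exact outside hu

theorem eq_zonalProfile (hG : IsPolarChart G) (hle : ∀ u, |G u| ≤ 2) (h0 : G 0 = 2) (u : ℂ) :
    G u = zonalProfile ‖u‖ := by
  have hmax (u) : G u ≤ G 0 := h0 ▸ (abs_le.1 (hle u)).2
  have bound (n : ℕ) : ∀ u, |G u - zonalProfile ‖u‖| ≤ 4 * (1 / 2) ^ n := by
    induction n with
    | zero =>
      intro u
      linarith [abs_sub (G u) (zonalProfile ‖u‖), hle u, abs_zonalProfile_le ‖u‖]
    | succ n ih =>
      intro u
      refine (hG.abs_sub_zonalProfile_le_half hmax h0 ih u).trans_eq ?_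
      ring
  have lim : Tendsto (fun n : ℕ ↦ 4 * (1 / 2 : ℝ) ^ n) atTop (𝓝 0) := by
    simpa using (tendsto_pow_atTop_nhds_zero_of_lt_one (by norm_num)
      (by norm_num : (1 / 2 : ℝ) < 1)).const_mul 4
  exact sub_eq_zero.1 (abs_nonpos_iff.1 (ge_of_tendsto' lim fun n ↦ bound n u))

end IsPolarChart

/-- The polar charts bounded by `2`, the value at the pole of an extremal one. As a subset of the
product space `ℂ → ℝ` it is compact by Tychonoff's theorem. -/
def boundedPolarCharts : Set (ℂ → ℝ) := {G | IsPolarChart G ∧ ∀ u, |G u| ≤ 2}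

theorem isCompact_boundedPolarCharts : IsCompact boundedPolarCharts := by
  refine (isCompact_univ_pi fun _ : ℂ ↦ isCompact_Icc (a := (-2 : ℝ)) (b := 2)).of_isClosed_subset
    ?_ fun G hG u _ ↦ abs_le.1 (hG.2 u)
  have : boundedPolarCharts =
      {G | ∀ u v w : ℂ, ⟪u, v⟫ = -1 → ⟪v, w⟫ = -1 → ⟪u, w⟫ = -1 → G u + G v + G w = 0} ∩
        {G | ∀ u : ℂ, u ≠ 0 → G u + G (-(‖u‖ ^ 2)⁻¹ • u) = G 0 / 2} ∩
          {G | ∀ u, |G u| ≤ 2} :=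
    Set.ext fun G ↦ ⟨fun h ↦ ⟨⟨h.1.triple, h.1.antipode⟩, h.2⟩, fun h ↦ ⟨⟨h.1.1, h.1.2⟩, h.2⟩⟩
  rw [this]
  simp only [Set.ofPred_forall]
  refine .inter (.inter ?_ ?_) ?_ <;>
    repeat' first
      | refine isClosed_iInter fun _ ↦ ?_
      | exact isClosed_eq (by fun_prop) (by fun_prop)
      | exact isClosed_le (by fun_prop) (by fun_prop)

theorem exists_forall_abs_sub_zonalProfile_lt (r : ℝ) {ε : ℝ} (hε : 0 < ε) :
    ∃ δ > 0, ∀ G ∈ boundedPolarCharts, 2 - δ ≤ G 0 → ∀ u, ‖u‖ = r →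
      |G u - zonalProfile r| < ε := by
  have hclosed : IsClosed {G : ℂ → ℝ | ε ≤ |G r - zonalProfile r|} :=
    isClosed_le (by fun_prop) (by fun_prop)
  obtain ⟨δ, hδ, hfar⟩ := (isCompact_boundedPolarCharts.inter_right hclosed).exists_forall_le'
    (f := fun G ↦ 2 - G 0) (a := 0) (by fun_prop) fun G ⟨⟨hG, hle⟩, hfar⟩ ↦ by
      refine sub_pos.2 ((abs_le.1 (hle 0)).2.lt_of_ne fun h0 ↦ ?_)
      have hfar : ε ≤ |G r - zonalProfile r| := hfar
      rw [hG.eq_zonalProfile hle h0] at hfar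
      simp [zonalProfile] at hfar
      linarith
  refine ⟨δ / 2, half_pos hδ, fun G ⟨hG, hle⟩ h0 u hu ↦ ?_⟩
  obtain ⟨ζ, hζ, hζu⟩ : ∃ ζ : ℂ, ‖ζ‖ = 1 ∧ ζ * r = u :=
    ⟨exp (arg u * I), norm_exp_ofReal_mul_I _, by rw [← hu, mul_comm, norm_mul_exp_arg_mul_I]⟩
  by_contra! hfar_u
  have := hfar (fun z ↦ G (ζ * z)) ⟨⟨hG.comp_mul_left hζ, fun z ↦ hle _⟩,
    by simpa [hζu] using hfar_u⟩
  simp at this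
  linarith

theorem antitoneOn_zonalProfile : AntitoneOn zonalProfile (Set.Ici 0) := fun r hr s _ hrs ↦ by
  unfold zonalProfile
  have : 0 ≤ r := hr
  gcongr

theorem exists_zonalProfile_eq {y : ℝ} (h₁ : -1 < y) (h₂ : y < 2) :
    ∃ r > 0, zonalProfile r = y := by
  refine ⟨√((2 - y) / (1 + y)), ?_, ?_⟩
  · exact Real.sqrt_pos.2 (div_pos (by linarith) (by linarith))
  · rw [zonalProfile, Real.sq_sqrt (div_nonneg (by linarith) (by linarith))]
    have : 1 + y ≠ 0 := by linarith
    field_simp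
    ring

theorem IsPolarChart.exists_apply_le_of_le_norm {G : ℂ → ℝ} (hG : IsPolarChart G) {B : ℝ}
    (hB : ∀ u, G u ≤ B) {r : ℝ} (hr : 0 < r) {u : ℂ} (hru : r ≤ ‖u‖) :
    ∃ v, ‖v‖ = r ∧ G u ≤ G v + 2 * (B - G 0) := by
  have hu : ‖u‖ ≠ 0 := (hr.trans_le hru).ne'
  refine ⟨(r / ‖u‖ : ℝ) * u, by simp [abs_of_pos hr, hu], ?_⟩
  have := hG.apply_real_mul_le hB ((r / ‖u‖ : ℝ) * u) ((one_le_div hr).2 hru)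
  rwa [← mul_assoc, ← ofReal_mul, div_mul_div_cancel₀ hr.ne', div_self hu, ofReal_one,
    one_mul] at this

theorem IsPolarChart.exists_le_apply_of_norm_le {G : ℂ → ℝ} (hG : IsPolarChart G) {B : ℝ}
    (hB : ∀ u, G u ≤ B) {r : ℝ} {u : ℂ} (hu : u ≠ 0) (hur : ‖u‖ ≤ r) :
    ∃ v, ‖v‖ = r ∧ G v ≤ G u + 2 * (B - G 0) :=
  ⟨(r / ‖u‖ : ℝ) * u, by simp [abs_of_nonneg ((norm_nonneg u).trans hur), hu],
    hG.apply_real_mul_le hB u ((one_le_div (norm_pos_iff.2 hu)).2 hur)⟩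

theorem exists_forall_zonalProfile_bounds {η : ℝ} (hη : 0 < η) (hη1 : η < 1) :
    ∃ δ > 0, δ < 1 / 2 ∧ ∀ G ∈ boundedPolarCharts, 2 - 2 * δ ≤ G 0 → ∀ u,
      (-δ ≤ G u → -η ≤ zonalProfile ‖u‖) ∧ (G u ≤ δ → zonalProfile ‖u‖ ≤ η) := by
  obtain ⟨r, hr, hZr⟩ := exists_zonalProfile_eq (y := -η) (by linarith) (by linarith)
  obtain ⟨s, hs, hZs⟩ := exists_zonalProfile_eq (y := η) (by linarith) (by linarith)
  obtain ⟨δr, hδr, near_r⟩ := exists_forall_abs_sub_zonalProfile_lt r (half_pos hη)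
  obtain ⟨δs, hδs, near_s⟩ := exists_forall_abs_sub_zonalProfile_lt s (half_pos hη)
  obtain ⟨δ, hδ, hδ_lt⟩ : ∃ δ > 0, δ < min (min δr δs) η / 10 := exists_between (by positivity)
  simp only [lt_div_iff₀ (by norm_num : (0 : ℝ) < 10), lt_min_iff] at hδ_lt
  refine ⟨δ, hδ, by linarith, fun G hG h0 u ↦ ⟨fun hGu ↦ ?_, fun hGu ↦ ?_⟩⟩ <;>
    have hle (v) : G v ≤ 2 := (abs_le.1 (hG.2 v)).2
  · contrapose! hGu
    have hru : r < ‖u‖ := lt_of_not_ge fun h ↦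
      hGu.not_ge (hZr ▸ antitoneOn_zonalProfile (norm_nonneg u) hr.le h)
    obtain ⟨v, hv, huv⟩ := hG.1.exists_apply_le_of_le_norm hle hr hru.le
    linarith [(abs_lt.1 (near_r G hG (by linarith) v hv)).2]
  · contrapose! hGu
    rcases eq_or_ne u 0 with rfl | hu
    · linarith
    have hus : ‖u‖ < s := lt_of_not_ge fun h ↦
      hGu.not_ge (hZs ▸ antitoneOn_zonalProfile hs.le (norm_nonneg u) h)
    obtain ⟨v, hv, hvu⟩ := hG.1.exists_le_apply_of_norm_le hle hu hus.le
    linarith [(abs_lt.1 (near_s G hG (by linarith) v hv)).1]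

end PolarCharts

section SpaceCharts

open Module RealInnerProductSpace

open Complex (I)

variable {E : Type*} [NormedAddCommGroup E] [InnerProductSpace ℝ E] {F : E → ℝ} {p : E}
  {J : ℂ →ₗᵢ[ℝ] E}

theorem exists_planar_isometry (hE : finrank ℝ E = 3) (hp : ‖p‖ = 1) :
    ∃ J : ℂ →ₗᵢ[ℝ] E, (∀ u, ⟪J u, p⟫ = 0) ∧ ∀ v, ∃ u, J u + ⟪p, v⟫ • p = v := by
  have : Fact (finrank ℝ E = 2 + 1) := ⟨hE⟩
  have hp0 : p ≠ 0 := norm_ne_zero_iff.1 (hp ▸ one_ne_zero)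
  let e := Complex.isometryOfOrthonormal
    (OrthonormalBasis.fromOrthogonalSpanSingleton (𝕜 := ℝ) 2 hp0)
  refine ⟨(ℝ ∙ p)ᗮ.subtypeₗᵢ.comp e.toLinearIsometry, fun u ↦ ?_, fun v ↦ ?_⟩
  · exact Submodule.mem_orthogonal_singleton_iff_inner_left.1 (e u).2
  · have hv : v - ⟪p, v⟫ • p ∈ (ℝ ∙ p)ᗮ := by
      rw [Submodule.mem_orthogonal_singleton_iff_inner_right, inner_sub_right, inner_smul_right,
        real_inner_self_eq_norm_sq, hp]
      ring
    exact ⟨e.symm ⟨_, hv⟩, by simp⟩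

/-- The symmetrization of `F` by a quarter turn about `p`, read in the gnomonic chart around `p`,
where `J` identifies `ℂ` with the plane orthogonal to `p`. -/
noncomputable def polarChart (F : E → ℝ) (J : ℂ →ₗᵢ[ℝ] E) (p : E) (u : ℂ) : ℝ :=
  rayValue F (J u + p) + rayValue F (J (I * u) + p)

theorem inner_self_I_mul (u : ℂ) : ⟪u, I * u⟫ = 0 := by
  simp only [Complex.inner, Complex.mul_re, Complex.mul_im, Complex.I_re, Complex.I_im,
    Complex.conj_re, Complex.conj_im]
  ring

theorem inner_chart (hp : ‖p‖ = 1) (hJ : ∀ u, ⟪J u, p⟫ = 0) (u v : ℂ) :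
    ⟪J u + p, J v + p⟫ = ⟪u, v⟫ + 1 := by
  simp [inner_add_left, inner_add_right, hJ, real_inner_comm (J v) p, hp]

theorem chart_ne_zero (hp : ‖p‖ = 1) (hJ : ∀ u, ⟪J u, p⟫ = 0) (u : ℂ) : J u + p ≠ 0 := fun h ↦ by
  simpa [hJ, hp, inner_add_left] using congrArg (⟪·, p⟫) h

theorem rayValue_chart_add_three (hF : IsFrameFunction ℝ F 0) (hE : finrank ℝ E = 3)
    (hp : ‖p‖ = 1) (hJ : ∀ u, ⟪J u, p⟫ = 0) {u v w : ℂ}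
    (huv : ⟪u, v⟫ = -1) (hvw : ⟪v, w⟫ = -1) (huw : ⟪u, w⟫ = -1) :
    rayValue F (J u + p) + rayValue F (J v + p) + rayValue F (J w + p) = 0 := by
  apply hF.rayValue_add_three hE <;> first
    | exact chart_ne_zero hp hJ _
    | rw [inner_chart hp hJ, ‹⟪_, _⟫ = (-1 : ℝ)›, neg_add_cancel]

theorem rayValue_equator_add_pole (hF : IsFrameFunction ℝ F 0) (hE : finrank ℝ E = 3)
    (hp : ‖p‖ = 1) (hJ : ∀ u, ⟪J u, p⟫ = 0) {u : ℂ} (hu : u ≠ 0) :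
    rayValue F (J u) + rayValue F (J (I * u)) + rayValue F p = 0 :=
  hF.rayValue_add_three hE ((map_ne_zero_iff J J.injective).2 hu)
    ((map_ne_zero_iff J J.injective).2 (by simpa)) (norm_ne_zero_iff.1 (hp ▸ one_ne_zero))
    ((J.inner_map_map _ _).trans (inner_self_I_mul u)) (hJ _) (hJ _)

theorem rayValue_chart_add_antipode (hF : IsFrameFunction ℝ F 0) (hE : finrank ℝ E = 3)
    (hp : ‖p‖ = 1) (hJ : ∀ u, ⟪J u, p⟫ = 0) {u : ℂ} (hu : u ≠ 0) :
    rayValue F (J u + p) + rayValue F (J (-(‖u‖ ^ 2)⁻¹ • u) + p) + rayValue F (J (I * u)) = 0 := by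
  have hinner (c : ℝ) : ⟪J (c • u) + p, J (I * u)⟫ = 0 := by
    rw [inner_add_left, J.inner_map_map, inner_smul_left, inner_self_I_mul, real_inner_comm, hJ,
      mul_zero, add_zero]
  refine hF.rayValue_add_three hE (chart_ne_zero hp hJ _) (chart_ne_zero hp hJ _)
    ((map_ne_zero_iff J J.injective).2 (by simpa)) ?_ (hinner _) (by simpa using hinner 1)
  rw [inner_chart hp hJ, inner_smul_right, real_inner_self_eq_norm_sq]
  field_simp
  ring

theorem isPolarChart_polarChart (hF : IsFrameFunction ℝ F 0) (hE : finrank ℝ E = 3)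
    (hp : ‖p‖ = 1) (hJ : ∀ u, ⟪J u, p⟫ = 0) :
    IsPolarChart (polarChart F J p) where
  triple u v w huv hvw huw := by
    have inner_I_mul (a b : ℂ) : ⟪I * a, I * b⟫ = ⟪a, b⟫ := by
      rw [inner_mul_mul_left, Complex.norm_I, one_pow, one_mul]
    have := rayValue_chart_add_three hF hE hp hJ huv hvw huw
    have := rayValue_chart_add_three hF hE hp hJ ((inner_I_mul u v).trans huv)
      ((inner_I_mul v w).trans hvw) ((inner_I_mul u w).trans huw)
    simp only [polarChart]
    linarith
  antipode u hu := by
    have hIIu : rayValue F (J (I * (I * u))) = rayValue F (J u) := by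
      rw [← mul_assoc, Complex.I_mul_I, neg_one_mul, map_neg, rayValue, rayValue, hF.map_neg,
        norm_neg]
    have hu_antipode := rayValue_chart_add_antipode hF hE hp hJ hu
    have hIu_antipode := rayValue_chart_add_antipode hF hE hp hJ (u := I * u) (by simpa)
    have hpole := rayValue_equator_add_pole hF hE hp hJ hu
    simp only [norm_mul, Complex.norm_I, one_mul, hIIu] at hIu_antipode
    simp only [polarChart, map_zero, zero_add, mul_zero, add_self_div_two, mul_smul_comm]
    linarith

theorem polarChart_zero (hp : ‖p‖ = 1) : polarChart F J p 0 = 2 * F p := by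
  simp [polarChart, rayValue, hp, two_mul]

theorem polarChart_mem_boundedPolarCharts (hF : IsFrameFunction ℝ F 0) (hE : finrank ℝ E = 3)
    (hle : ∀ v, |F v| ≤ ‖v‖ ^ 2) (hp : ‖p‖ = 1) (hJ : ∀ u, ⟪J u, p⟫ = 0) :
    polarChart F J p ∈ boundedPolarCharts := by
  refine ⟨isPolarChart_polarChart hF hE hp hJ, fun u ↦ (abs_add_le _ _).trans ?_⟩
  have hray (v) : |rayValue F v| ≤ 1 := abs_rayValue_le zero_le_one (by simpa using hle) v
  linarith [hray (J u + p), hray (J (I * u) + p)]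

theorem zonal_smul_chart (hE : finrank ℝ E = 3) (hp : ‖p‖ = 1) (hJ : ∀ u, ⟪J u, p⟫ = 0) (c : ℝ)
    (u : ℂ) : zonal p (c • (J u + p)) = zonalProfile ‖u‖ * ‖c • (J u + p)‖ ^ 2 := by
  have hnorm : ‖J u + p‖ ^ 2 = 1 + ‖u‖ ^ 2 := by
    rw [← real_inner_self_eq_norm_sq, inner_chart hp hJ, real_inner_self_eq_norm_sq, add_comm]
  have hinner : ⟪p, J u + p⟫ = 1 := by
    rw [inner_add_right, real_inner_comm, hJ, real_inner_self_eq_norm_sq, hp]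
    norm_num
  rw [zonal, hE, inner_smul_right, hinner, norm_smul, mul_pow, mul_pow, hnorm, Real.norm_eq_abs,
    sq_abs, zonalProfile]
  field_simp
  push_cast
  ring

theorem apply_add_apply_le_one_of_inner_eq_zero (hE : finrank ℝ E = 3) (hF : IsFrameFunction ℝ F 0)
    (hle : ∀ v, |F v| ≤ ‖v‖ ^ 2) {v : E} (hp : ‖p‖ = 1) (hv : ‖v‖ = 1) (hpv : ⟪p, v⟫ = 0) :
    F p + F v ≤ 1 := by
  obtain ⟨J, hJ, hsurj⟩ := exists_planar_isometry hE hp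
  obtain ⟨u, rfl⟩ : ∃ u, J u = v := by simpa [hpv] using hsurj v
  have hu : ‖u‖ = 1 := by simpa using hv
  have hpole := rayValue_equator_add_pole hF hE hp hJ (norm_ne_zero_iff.1 (hu ▸ one_ne_zero))
  simp only [rayValue, J.norm_map, norm_mul, Complex.norm_I, hu, hp, mul_one, one_pow,
    div_one] at hpole
  have hJIu := hle (J (I * u))
  simp only [J.norm_map, norm_mul, Complex.norm_I, hu, mul_one, one_pow] at hJIu
  linarith [(abs_le.1 hJIu).1]

theorem exists_forall_zonal_bounds (hE : finrank ℝ E = 3) {η : ℝ} (hη : 0 < η) (hη1 : η < 1) :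
    ∃ δ > 0, δ < 1 / 2 ∧ ∀ F : E → ℝ, IsFrameFunction ℝ F 0 → (∀ v, |F v| ≤ ‖v‖ ^ 2) →
      ∀ p v : E, ‖p‖ = 1 → ‖v‖ = 1 → 1 - δ ≤ F p →
        (1 - δ ≤ F v → -η ≤ zonal p v) ∧ (F v ≤ -1 + δ → zonal p v ≤ η) := by
  obtain ⟨δ, hδ, hδ_lt, bounds⟩ := exists_forall_zonalProfile_bounds hη hη1
  refine ⟨δ, hδ, hδ_lt, fun F hF hle p v hp hv hFp ↦ ?_⟩
  rcases eq_or_ne ⟪p, v⟫ 0 with hpv | hpv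
  · have := apply_add_apply_le_one_of_inner_eq_zero hE hF hle hp hv hpv
    rw [zonal, hpv, hv]
    exact ⟨fun hFv ↦ by linarith, fun _ ↦ by linarith⟩
  · obtain ⟨J, hJ, hsurj⟩ := exists_planar_isometry hE hp
    obtain ⟨u, hu⟩ := hsurj ((⟪p, v⟫)⁻¹ • v)
    rw [inner_smul_right, inv_mul_cancel₀ hpv, one_smul] at hu
    obtain ⟨z, hz, rfl⟩ : ∃ z : ℝ, z ≠ 0 ∧ z • (J u + p) = v := ⟨⟪p, v⟫, hpv, by simp [hu, hpv]⟩
    have hG := bounds (polarChart F J p) (polarChart_mem_boundedPolarCharts hF hE hle hp hJ)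
      (by rw [polarChart_zero hp]; linarith) u
    have hFv : polarChart F J p u = F (z • (J u + p)) + rayValue F (J (I * u) + p) := by
      rw [polarChart, ← hF.rayValue_smul hz, rayValue, hv, one_pow, div_one]
    have hray := abs_le.1 (abs_rayValue_le (F := F) zero_le_one (by simpa) (J (I * u) + p))
    rw [zonal_smul_chart hE hp hJ, hv, one_pow, mul_one]
    exact ⟨fun h ↦ hG.1 (by linarith), fun h ↦ hG.2 (by linarith)⟩

end SpaceCharts

section Contraction

open Module RealInnerProductSpace

variable {E : Type*} [NormedAddCommGroup E] [InnerProductSpace ℝ E]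

theorem one_le_zonal_of_dist_lt (hE : finrank ℝ E = 3) {p v : E} (hp : ‖p‖ = 1) (hv : ‖v‖ = 1)
    (h : dist p v < 1 / 2) : 1 ≤ zonal p v := by
  have hsq : dist p v ^ 2 < (1 / 2) ^ 2 := by gcongr
  rw [dist_eq_norm, norm_sub_sq_real, hp, hv] at hsq
  have : (7 / 8) ^ 2 ≤ ⟪p, v⟫ ^ 2 := by
    gcongr
    linarith
  rw [zonal, hE, hv]
  push_cast
  linarith

theorem exists_local_bump (hE : finrank ℝ E = 3) {η : ℝ} (hη : 0 < η) (hη1 : η < 1) :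
    ∃ δ > 0, δ < 1 / 2 ∧ ∀ F : E → ℝ, IsFrameFunction ℝ F 0 → (∀ v, |F v| ≤ ‖v‖ ^ 2) → ∀ c : E,
      ∃ Q ∈ quadraticFrameFunctions E, (∀ v, |Q v| ≤ 2 * ‖v‖ ^ 2) ∧ ∀ v, ‖v‖ = 1 →
        (1 - δ ≤ F v → -η ≤ Q v ∧ (v ∈ Metric.ball c (1 / 4) → 1 ≤ Q v)) ∧
        (F v ≤ -1 + δ → Q v ≤ η) := by
  obtain ⟨δ, hδ, hδ_lt, bounds⟩ := exists_forall_zonal_bounds hE hη hη1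
  refine ⟨δ, hδ, hδ_lt, fun F hF hle c ↦ ?_⟩
  by_cases hc : ∃ p ∈ Metric.ball c (1 / 4), ‖p‖ = 1 ∧ 1 - δ ≤ F p
  · obtain ⟨p, hpc, hp, hFp⟩ := hc
    refine ⟨zonal p, zonal_mem_quadraticFrameFunctions hp, abs_zonal_le hE hp, fun v hv ↦
      ⟨fun hFv ↦ ⟨(bounds F hF hle p v hp hv hFp).1 hFv, fun hvc ↦ ?_⟩,
        (bounds F hF hle p v hp hv hFp).2⟩⟩
    refine one_le_zonal_of_dist_lt hE hp hv ((dist_triangle_right p v c).trans_lt ?_)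
    linarith [Metric.mem_ball.1 hpc, Metric.mem_ball.1 hvc]
  · push Not at hc
    refine ⟨0, zero_mem _, fun v ↦ by simp, fun v hv ↦ ?_⟩
    exact ⟨fun hFv ↦ ⟨by simpa using hη.le, fun hvc ↦ absurd hFv (hc v hvc hv).not_ge⟩,
      fun _ ↦ hη.le⟩

theorem exists_forall_separating (hE : finrank ℝ E = 3) :
    ∃ δ > 0, δ < 1 / 2 ∧ ∃ M ≥ 0, ∀ F : E → ℝ, IsFrameFunction ℝ F 0 → (∀ v, |F v| ≤ ‖v‖ ^ 2) →
      ∃ Q ∈ quadraticFrameFunctions E, (∀ v, |Q v| ≤ M * ‖v‖ ^ 2) ∧ ∀ v, ‖v‖ = 1 →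
        (1 - δ ≤ F v → 3 / 4 ≤ Q v) ∧ (F v ≤ -1 + δ → Q v ≤ 1 / 4) := by
  have := FiniteDimensional.of_finrank_eq_succ hE
  obtain ⟨t, -, ht, hcover⟩ := (isCompact_sphere (0 : E) 1).finite_cover_balls
    (by norm_num : (0 : ℝ) < 1 / 4)
  lift t to Finset E using ht
  obtain ⟨η, hη, hη1, htη⟩ : ∃ η : ℝ, 0 < η ∧ η < 1 ∧ t.card * η ≤ 1 / 4 := by
    refine ⟨1 / (4 * (t.card + 1)), by positivity, ?_, ?_⟩
    · rw [div_lt_one (by positivity)]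
      linarith [t.card.cast_nonneg (α := ℝ)]
    · field_simp
      linarith
  obtain ⟨δ, hδ, hδ_lt, bump⟩ := exists_local_bump hE hη hη1
  refine ⟨δ, hδ, hδ_lt, t.card * 2, by positivity, fun F hF hle ↦ ?_⟩
  choose Q hQ hQle hQF using bump F hF hle
  refine ⟨∑ c ∈ t, Q c, sum_mem fun c _ ↦ hQ c, fun v ↦ ?_,
    fun v hv ↦ ⟨fun hFv ↦ ?_, fun hFv ↦ ?_⟩⟩
  · rw [Finset.sum_apply, mul_assoc, ← nsmul_eq_mul]
    exact (Finset.abs_sum_le_sum_abs _ _).trans (Finset.sum_le_card_nsmul _ _ _ fun c _ ↦ hQle c v)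
  · obtain ⟨c, hc, hvc⟩ := Set.mem_iUnion₂.1 (hcover (mem_sphere_zero_iff_norm.2 hv))
    have hc1 := ((hQF c v hv).1 hFv).2 hvc
    have hsum := Finset.single_le_sum (f := fun c ↦ Q c v + η)
      (fun c _ ↦ neg_le_iff_add_nonneg.1 ((hQF c v hv).1 hFv).1) hc
    rw [Finset.sum_add_distrib, Finset.sum_const, nsmul_eq_mul] at hsum
    rw [Finset.sum_apply]
    linarith
  · rw [Finset.sum_apply]
    refine (Finset.sum_le_card_nsmul _ _ _ fun c _ ↦ (hQF c v hv).2 hFv).trans ?_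
    rwa [nsmul_eq_mul]

theorem exists_forall_two_sided_separating (hE : finrank ℝ E = 3) :
    ∃ δ > 0, δ < 1 / 2 ∧ ∃ M ≥ 0, ∀ F : E → ℝ, IsFrameFunction ℝ F 0 → (∀ v, |F v| ≤ ‖v‖ ^ 2) →
      ∃ Q ∈ quadraticFrameFunctions E, (∀ v, |Q v| ≤ M * ‖v‖ ^ 2) ∧ ∀ v, ‖v‖ = 1 →
        (1 - δ ≤ F v → 1 / 2 ≤ Q v) ∧ (F v ≤ -1 + δ → Q v ≤ -1 / 2) := by
  obtain ⟨δ, hδ, hδ_lt, M, hM, separating⟩ := exists_forall_separating hE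
  refine ⟨δ, hδ, hδ_lt, 2 * M, by positivity, fun F hF hle ↦ ?_⟩
  obtain ⟨P, hP, hPle, hPF⟩ := separating F hF hle
  obtain ⟨R, hR, hRle, hRF⟩ := separating (-F) (by simpa using hF.const_smul (-1)) (by simpa)
  refine ⟨P - R, sub_mem hP hR, fun v ↦ (abs_sub _ _).trans ?_, fun v hv ↦ ?_⟩
  · linarith [hPle v, hRle v]
  · simp only [Pi.sub_apply, Pi.neg_apply] at hRF ⊢
    exact ⟨fun hFv ↦ by linarith [(hPF v hv).1 hFv, (hRF v hv).2 (by linarith)],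
      fun hFv ↦ by linarith [(hPF v hv).2 hFv, (hRF v hv).1 (by linarith)]⟩

theorem exists_contraction (hE : finrank ℝ E = 3) :
    ∃ c : ℝ, 0 < c ∧ c < 1 ∧ ∀ F : E → ℝ, IsFrameFunction ℝ F 0 → (∀ v, |F v| ≤ ‖v‖ ^ 2) →
      ∃ Q ∈ quadraticFrameFunctions E, ∀ v, |(F - Q) v| ≤ c * ‖v‖ ^ 2 := by
  obtain ⟨δ, hδ, hδ_lt, M, hM, separating⟩ := exists_forall_two_sided_separating hE
  obtain ⟨ε, hε, hεδ⟩ : ∃ ε > 0, ε * (M + 1) = δ := ⟨δ / (M + 1), by positivity, by field_simp⟩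
  have hεM : 0 ≤ ε * M := by positivity
  refine ⟨1 - ε / 2, by linarith, by linarith, fun F hF hle ↦ ?_⟩
  obtain ⟨Q, hQ, hQle, hQF⟩ := separating F hF hle
  refine ⟨ε • Q, Submodule.smul_mem _ _ hQ,
    (hF.sub (hQ.1.const_smul ε)).abs_le_of_forall_norm_eq_one fun v hv ↦ ?_⟩
  have hFv := hle v
  have hQv := hQle v
  rw [hv, one_pow, abs_le] at hFv
  rw [hv, one_pow, mul_one, abs_le] at hQv
  have hεQ : ε * Q v ≤ ε * M ∧ ε * (-M) ≤ ε * Q v := by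
    constructor <;> gcongr <;> linarith
  simp only [Pi.sub_apply, Pi.smul_apply, smul_eq_mul, abs_le]
  by_cases hhigh : 1 - δ ≤ F v
  · have := mul_le_mul_of_nonneg_left ((hQF v hv).1 hhigh) hε.le
    constructor <;> linarith
  by_cases hlow : F v ≤ -1 + δ
  · have := mul_le_mul_of_nonneg_left ((hQF v hv).2 hlow) hε.le
    constructor <;> linarith
  · constructor <;> linarith

theorem IsFrameFunction.exists_quadratic_approx (hE : finrank ℝ E = 3) {F : E → ℝ}
    (hF : IsFrameFunction ℝ F 0) (hle : ∀ v, |F v| ≤ ‖v‖ ^ 2) {ε : ℝ} (hε : 0 < ε) :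
    ∃ Q ∈ quadraticFrameFunctions E, ∀ v, |(F - Q) v| ≤ ε * ‖v‖ ^ 2 := by
  obtain ⟨c, hc, hc1, contract⟩ := exists_contraction hE
  have iterate (n : ℕ) : ∃ Q ∈ quadraticFrameFunctions E, ∀ v, |(F - Q) v| ≤ c ^ n * ‖v‖ ^ 2 := by
    induction n with
    | zero => exact ⟨0, zero_mem _, by simpa⟩
    | succ n ih =>
      obtain ⟨Q, hQ, hQle⟩ := ih
      have hR : IsFrameFunction ℝ ((c ^ n)⁻¹ • (F - Q)) 0 := by
        simpa using (hF.sub hQ.1).const_smul (c ^ n)⁻¹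
      obtain ⟨P, hP, hPle⟩ := contract _ hR fun v ↦ by
        rw [Pi.smul_apply, smul_eq_mul, abs_mul, abs_of_pos (by positivity),
          inv_mul_le_iff₀ (by positivity)]
        exact hQle v
      refine ⟨Q + c ^ n • P, add_mem hQ (Submodule.smul_mem _ _ hP), fun v ↦ ?_⟩
      have hsplit : F - (Q + c ^ n • P) = c ^ n • ((c ^ n)⁻¹ • (F - Q) - P) := by
        rw [smul_sub, smul_inv_smul₀ (by positivity), sub_sub]
      rw [hsplit, Pi.smul_apply, smul_eq_mul, abs_mul, abs_of_pos (by positivity), pow_succ,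
        mul_assoc]
      gcongr
      exact hPle v
  obtain ⟨n, hn⟩ := exists_pow_lt_of_lt_one hε hc1
  obtain ⟨Q, hQ, hQle⟩ := iterate n
  exact ⟨Q, hQ, fun v ↦ (hQle v).trans (by gcongr)⟩

theorem ParallelogramLaw.of_forall_exists_approx {F : E → ℝ}
    (h : ∀ ε > 0, ∃ Q : E → ℝ, ParallelogramLaw Q ∧ ∀ v, |(F - Q) v| ≤ ε * ‖v‖ ^ 2) :
    ParallelogramLaw F := fun u v ↦ by
  refine sub_eq_zero.1 (abs_nonpos_iff.1 (le_of_forall_pos_le_add fun ε hε ↦ ?_))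
  obtain ⟨κ, hκ, hκε⟩ : ∃ κ > 0, κ * (4 * (‖u‖ ^ 2 + ‖v‖ ^ 2 + 1)) = ε :=
    ⟨ε / (4 * (‖u‖ ^ 2 + ‖v‖ ^ 2 + 1)), by positivity, by field_simp⟩
  obtain ⟨Q, hQ, hFQ⟩ := h κ hκ
  set D := F - Q with hD
  have hdefect : F (u + v) + F (u - v) - (2 * F u + 2 * F v) =
      D (u + v) + D (u - v) - 2 * D u - 2 * D v := by
    simp only [hD, Pi.sub_apply]
    linear_combination hQ u v
  rw [hdefect]
  have bounds (x) := abs_le.1 (hFQ x)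
  calc |D (u + v) + D (u - v) - 2 * D u - 2 * D v|
      ≤ κ * ‖u + v‖ ^ 2 + κ * ‖u - v‖ ^ 2 + 2 * (κ * ‖u‖ ^ 2) + 2 * (κ * ‖v‖ ^ 2) := by
        rw [abs_le]
        constructor <;> linarith [bounds (u + v), bounds (u - v), bounds u, bounds v]
    _ = κ * (4 * (‖u‖ ^ 2 + ‖v‖ ^ 2)) := by linear_combination κ * parallelogramLaw_norm_sq u v
    _ ≤ 0 + ε := by linarith

theorem IsFrameFunction.parallelogramLaw_of_abs_le (hE : finrank ℝ E = 3) {F : E → ℝ} {W B : ℝ}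
    (hF : IsFrameFunction ℝ F W) (hB : ∀ v, |F v| ≤ B * ‖v‖ ^ 2) : ParallelogramLaw F := by
  set Z : E → ℝ := F - (W / 3) • fun v ↦ ‖v‖ ^ 2
  have hZ : IsFrameFunction ℝ Z 0 := by
    simpa [hE] using hF.sub ((isFrameFunction_norm_sq ℝ E).const_smul (W / 3))
  set C := |B| + |W / 3| + 1
  have hC : 0 < C := by positivity
  have hCZ : IsFrameFunction ℝ (C⁻¹ • Z) 0 := by simpa using hZ.const_smul C⁻¹
  have hle (v) : |(C⁻¹ • Z) v| ≤ ‖v‖ ^ 2 := by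
    rw [Pi.smul_apply, smul_eq_mul, abs_mul, abs_of_pos (inv_pos.2 hC), inv_mul_le_iff₀ hC]
    calc |Z v| ≤ |F v| + |W / 3 * ‖v‖ ^ 2| := abs_sub _ _
      _ ≤ |B| * ‖v‖ ^ 2 + |W / 3| * ‖v‖ ^ 2 := by
        rw [abs_mul, abs_of_nonneg (sq_nonneg ‖v‖)]
        gcongr
        exact (hB v).trans (by gcongr; exact le_abs_self B)
      _ ≤ C * ‖v‖ ^ 2 := by
        rw [← add_mul]
        gcongr
        linarith
  have hpar : ParallelogramLaw (C⁻¹ • Z) := .of_forall_exists_approx fun ε hε ↦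
    have ⟨Q, hQ, hQle⟩ := hCZ.exists_quadratic_approx hE hle hε
    ⟨Q, hQ.2, hQle⟩
  have hF_eq : F = C • C⁻¹ • Z + (W / 3) • fun v ↦ ‖v‖ ^ 2 := by
    rw [smul_inv_smul₀ hC.ne', sub_add_cancel]
  rw [hF_eq]
  exact (hpar.const_smul C).add (parallelogramLaw_norm_sq.const_smul _)

end Contraction

section JordanVonNeumann

open QuadraticMap

theorem ParallelogramLaw.polar_add_right {V : Type*} [AddCommGroup V] {F : V → ℝ}
    (hF : ParallelogramLaw F) (u v w : V) : polar F u (v + w) = polar F u v + polar F u w := by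
  have h₁ := hF (u + v) (u + w)
  have h₂ := hF (u + (v + w)) u
  have h₃ := hF v w
  rw [show u + v + (u + w) = u + (v + w) + u by abel, add_sub_add_left_eq_sub] at h₁
  rw [add_sub_cancel_left] at h₂
  simp only [polar]
  linarith

variable {E : Type*} [NormedAddCommGroup E] [NormedSpace ℝ E] {F : E → ℝ} {B : ℝ}

theorem ParallelogramLaw.polar_smul_right (hF : ParallelogramLaw F)
    (hB : ∀ v, |F v| ≤ B * ‖v‖ ^ 2) (c : ℝ) (u v : E) :
    polar F u (c • v) = c * polar F u v := by
  let φ : E →+ ℝ := AddMonoidHom.mk' (polar F u) (hF.polar_add_right u)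
  have hφ_le (v) (hv : v ∈ Metric.ball (0 : E) 1) :
      ‖φ v‖ ≤ |B| * (‖u‖ + 1) ^ 2 + |B| * ‖u‖ ^ 2 + |B| * 1 ^ 2 := by
    have hF_le (x : E) {r : ℝ} (hx : ‖x‖ ≤ r) : |F x| ≤ |B| * r ^ 2 :=
      (hB x).trans (by gcongr; exact le_abs_self B)
    have hv : ‖v‖ ≤ 1 := (mem_ball_zero_iff.1 hv).le
    exact (abs_sub _ _).trans (add_le_add ((abs_sub _ _).trans (add_le_add
      (hF_le _ (norm_add_le_of_le le_rfl hv)) (hF_le u le_rfl))) (hF_le v hv))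
  have hφ : Continuous φ := φ.continuous_of_isBounded_nhds_zero
    (Metric.ball_mem_nhds 0 one_pos) (isBounded_iff_forall_norm_le.2 ⟨_, by simpa using hφ_le⟩)
  exact map_real_smul φ hφ c v

theorem ParallelogramLaw.exists_quadraticForm (hF : ParallelogramLaw F)
    (hB : ∀ v, |F v| ≤ B * ‖v‖ ^ 2) : ∃ Q : QuadraticForm ℝ E, ∀ v, Q v = F v := by
  have hF0 : F 0 = 0 := by
    have := hF 0 0
    simp only [add_zero, sub_zero] at this
    linarith
  have hpolar (v) : polar F v v = 2 * F v := by
    have := hF v v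
    rw [sub_self, hF0] at this
    rw [polar]
    linarith
  have hsmul := hF.polar_smul_right hB
  refine ⟨.ofPolar F (fun c v ↦ ?_) (fun u u' v ↦ ?_) (fun c u v ↦ ?_), fun v ↦ rfl⟩
  · have hscale : polar F (c • v) (c • v) = c * (c * polar F v v) := by
      rw [hsmul, polar_comm, hsmul]
    rw [hpolar, hpolar] at hscale
    rw [smul_eq_mul]
    linarith
  · simp only [polar_comm F _ v, hF.polar_add_right]
  · simp only [polar_comm F _ v, hsmul, smul_eq_mul]

end JordanVonNeumann

section ComplexFrames

open Module Complex InnerProductSpace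

theorem re_smul_add_im_smul_I_smul {V : Type*} [AddCommGroup V] [Module ℂ V] (c : ℂ) (v : V) :
    c.re • v + c.im • Complex.I • v = c • v := by
  rw [RCLike.real_smul_eq_coe_smul (K := ℂ), RCLike.real_smul_eq_coe_smul (K := ℂ), smul_smul,
    ← add_smul]
  exact congrArg (· • v) (Complex.re_add_im c)

variable {H : Type*} [NormedAddCommGroup H] [InnerProductSpace ℂ H]

theorem exists_linearMap_inner_eq_quadraticForm [FiniteDimensional ℂ H] (Q : QuadraticForm ℝ H)
    (hQ : ∀ (c : ℂ) v, Q (c • v) = ‖c‖ ^ 2 * Q v) :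
    ∃ T : H →ₗ[ℂ] H, ∀ v, inner ℂ (T v) v = Q v := by
  let _ : InnerProductSpace ℝ H := .complexToReal
  have : FiniteDimensional ℝ H := .complexToReal H
  let b := QuadraticMap.associated Q
  have hb_self (v) : b v v = Q v := QuadraticMap.associated_eq_self_apply ℝ Q v
  have hb (u v) : b u v = (Q (u + v) - Q u - Q v) / 2 := by
    simp [b, QuadraticMap.associated_apply, div_eq_inv_mul]
  have hbI (u v) : b (Complex.I • u) (Complex.I • v) = b u v := by
    simp [hb, ← smul_add, hQ]
  let A : H →L[ℝ] H := continuousLinearMapOfBilin b.toContinuousBilinearMap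
  have hA (u v) : (inner ℂ (A u) v).re = b u v :=
    continuousLinearMapOfBilin_apply b.toContinuousBilinearMap u v
  have hAI (v) : A (Complex.I • v) = Complex.I • A v := by
    refine ext_inner_right ℝ fun w ↦ ?_
    have h := hbI v (-Complex.I • w)
    rw [← hA, ← hA] at h
    change (inner ℂ _ _).re = (inner ℂ _ _).re
    simpa [smul_smul, inner_smul_left, inner_smul_right] using h
  let T : H →ₗ[ℂ] H :=
    { toFun := A
      map_add' := map_add A
      map_smul' c v := by
        rw [RingHom.id_apply, ← re_smul_add_im_smul_I_smul c v, map_add, map_smul, map_smul, hAI,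
          re_smul_add_im_smul_I_smul] }
  refine ⟨T, fun v ↦ Complex.ext ((hA v v).trans (hb_self v)) ?_⟩
  have hvI : b v (Complex.I • v) = 0 := by
    have hsum : Q (v + Complex.I • v) = 2 * Q v := by
      rw [show v + Complex.I • v = (1 + Complex.I) • v by rw [add_smul, one_smul], hQ,
        ← Complex.normSq_eq_norm_sq]
      norm_num [Complex.normSq_apply]
    rw [hb, hsum, hQ, Complex.norm_I]
    ring
  have h := hA v (Complex.I • v)
  rw [hvI, inner_smul_right, Complex.I_mul_re, neg_eq_zero] at h
  exact h.trans (Complex.ofReal_im _).symm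

theorem IsFrameFunction.abs_le_of_nonneg {𝕜 E : Type*} [RCLike 𝕜] [NormedAddCommGroup E]
    [InnerProductSpace 𝕜 E] [FiniteDimensional 𝕜 E] {F : E → ℝ} {W : ℝ}
    (hF : IsFrameFunction 𝕜 F W) (hF0 : ∀ v, 0 ≤ F v) (v : E) : |F v| ≤ W * ‖v‖ ^ 2 := by
  refine hF.abs_le_of_forall_norm_eq_one (fun u hu ↦ ?_) v
  have hu' : Orthonormal 𝕜 ((↑) : ({u} : Set E) → E) :=
    orthonormal_subsingleton_iff.2 (by simpa)
  obtain ⟨s, b, hus, hb⟩ := hu'.exists_orthonormalBasis_extension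
  rw [abs_of_nonneg (hF0 u), ← hF.sum_eq_of_orthonormal
    (finrank_eq_card_basis b.toBasis).symm b.orthonormal]
  simpa [hb] using Finset.single_le_sum (f := fun i ↦ F (b i)) (fun i _ ↦ hF0 _)
    (Finset.mem_univ (⟨u, hus rfl⟩ : s))

theorem orthonormal_sumElim {𝕜 E : Type*} [RCLike 𝕜] [NormedAddCommGroup E] [InnerProductSpace 𝕜 E]
    {ι κ : Type*} {v : ι → E} {w : κ → E} (hv : Orthonormal 𝕜 v) (hw : Orthonormal 𝕜 w)
    (hvw : ∀ i j, inner 𝕜 (v i) (w j) = 0) : Orthonormal 𝕜 (Sum.elim v w) := by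
  refine ⟨?_, ?_⟩
  · rintro (i | j)
    exacts [hv.1 i, hw.1 j]
  · rintro (i | i) (j | j) hij
    · exact hv.2 (by simpa using hij)
    · exact hvw i j
    · exact inner_eq_zero_symm.1 (hvw j i)
    · exact hw.2 (by simpa using hij)

theorem exists_norm_eq_one_smul_eq {𝕜 E : Type*} [RCLike 𝕜] [NormedAddCommGroup E]
    [InnerProductSpace 𝕜 E] [FiniteDimensional 𝕜 E] {n : ℕ} (hn : n < finrank 𝕜 E)
    (a : Fin n → E) (w : E) (hw : ∀ i, inner 𝕜 (a i) w = 0) :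
    ∃ b : E, ‖b‖ = 1 ∧ (∀ i, inner 𝕜 (a i) b = 0) ∧ (‖w‖ : 𝕜) • b = w := by
  have hunit {z : E} (hz : z ≠ 0) (haz : ∀ i, inner 𝕜 (a i) z = 0) :
      ‖(‖z‖⁻¹ : 𝕜) • z‖ = 1 ∧ ∀ i, inner 𝕜 (a i) ((‖z‖⁻¹ : 𝕜) • z) = 0 :=
    ⟨by simp [norm_smul, hz], fun i ↦ by rw [inner_smul_right, haz, mul_zero]⟩
  rcases eq_or_ne w 0 with rfl | hw0
  · have hspan : Submodule.span 𝕜 (Set.range a) ≠ ⊤ := fun h ↦ by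
      have := finrank_range_le_card (R := 𝕜) a
      rw [Set.finrank, h, finrank_top, Fintype.card_fin] at this
      omega
    obtain ⟨z, hz, hz0⟩ := Submodule.exists_mem_ne_zero_of_ne_bot
      (mt Submodule.orthogonal_eq_bot_iff.1 hspan)
    have := hunit hz0 fun i ↦ hz (a i) (Submodule.subset_span ⟨i, rfl⟩)
    exact ⟨_, this.1, this.2, by simp⟩
  · exact ⟨_, (hunit hw0 hw).1, (hunit hw0 hw).2, smul_inv_smul₀ (by simpa) w⟩

theorem inner_sum_ofReal_smul {ι : Type*} [Fintype ι] {a : ι → H} (ha : Orthonormal ℂ a)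
    (x y : EuclideanSpace ℝ ι) :
    inner ℂ (∑ i, (x i : ℂ) • a i) (∑ i, (y i : ℂ) • a i) = (inner ℝ x y : ℝ) := by
  rw [ha.inner_sum]
  simp [PiLp.inner_apply, mul_comm]

theorem orthonormal_sum_ofReal_smul {κ ι : Type*} [Fintype ι] {a : ι → H} (ha : Orthonormal ℂ a)
    {x : κ → EuclideanSpace ℝ ι} (hx : Orthonormal ℝ x) :
    Orthonormal ℂ fun k ↦ ∑ i, (x k i : ℂ) • a i := by
  classical
  rw [orthonormal_iff_ite] at hx ⊢
  intro j k
  rw [inner_sum_ofReal_smul ha, hx]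
  split <;> simp

variable [FiniteDimensional ℂ H] {F : H → ℝ} {W B : ℝ}

theorem IsFrameFunction.exists_isFrameFunction_real (hF : IsFrameFunction ℂ F W) {ι : Type*}
    [Fintype ι] {a : ι → H} (ha : Orthonormal ℂ a) :
    ∃ W', IsFrameFunction ℝ (fun x : EuclideanSpace ℝ ι ↦ F (∑ i, (x i : ℂ) • a i)) W' := by
  set U := Submodule.span ℂ (Set.range a) with hU
  let d := stdOrthonormalBasis ℂ Uᗮ
  refine ⟨W - ∑ j, F (d j), fun c x ↦ ?_, fun b ↦ ?_⟩
  · rw [← norm_real c, ← hF.map_smul, Finset.smul_sum]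
    simp only [smul_smul, PiLp.smul_apply, smul_eq_mul, ofReal_mul]
  · have hd : Orthonormal ℂ fun j ↦ (d j : H) := d.orthonormal.comp_linearIsometry Uᗮ.subtypeₗᵢ
    have hbd := orthonormal_sumElim (orthonormal_sum_ofReal_smul ha b.orthonormal) hd fun k j ↦
      (d j).2 _ (sum_mem fun i _ ↦ U.smul_mem _ (Submodule.subset_span ⟨i, rfl⟩))
    have hcard : finrank ℝ (EuclideanSpace ℝ ι) + finrank ℂ Uᗮ = finrank ℂ H := by
      rw [← U.finrank_add_finrank_orthogonal, hU, finrank_span_eq_card ha.linearIndependent,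
        finrank_euclideanSpace]
    rw [← hF.sum_eq_of_orthonormal (by simpa using hcard) hbd]
    simp

theorem IsFrameFunction.parallelogramLaw_of_orthonormal (hF : IsFrameFunction ℂ F W)
    (hB : ∀ v, |F v| ≤ B * ‖v‖ ^ 2) {a : Fin 3 → H} (ha : Orthonormal ℂ a) :
    ParallelogramLaw fun x : EuclideanSpace ℝ (Fin 3) ↦ F (∑ i, (x i : ℂ) • a i) := by
  obtain ⟨W', hF'⟩ := hF.exists_isFrameFunction_real ha
  refine hF'.parallelogramLaw_of_abs_le (B := B) (by simp) fun x ↦ (hB _).trans_eq ?_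
  congr 1
  have h := inner_sum_ofReal_smul ha x x
  rw [inner_self_eq_norm_sq_to_K, real_inner_self_eq_norm_sq] at h
  exact ofReal_injective (by simpa using h)

theorem exists_orthonormal_real_coords (h3 : 3 ≤ finrank ℂ H) {u v : H} (hu : u ≠ 0)
    (huv : (inner ℂ u v).im = 0) : ∃ a : Fin 3 → H, Orthonormal ℂ a ∧
      ∃ x y : EuclideanSpace ℝ (Fin 3), ∑ i, (x i : ℂ) • a i = u ∧ ∑ i, (y i : ℂ) • a i = v := by
  obtain ⟨a, ha, -, hua⟩ := exists_norm_eq_one_smul_eq (𝕜 := ℂ) (by omega) ![] u (by simp)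
  obtain ⟨r, hr⟩ : ∃ r : ℝ, inner ℂ a v = r := by
    rw [← hua, inner_smul_left] at huv
    exact ⟨(inner ℂ a v).re, Complex.ext rfl (by simpa [hu] using huv)⟩
  obtain ⟨b, hb, hab, hvb⟩ := exists_norm_eq_one_smul_eq (𝕜 := ℂ) (by omega) ![a]
    (v - (r : ℂ) • a) (by simp [-Complex.coe_smul, inner_sub_right, inner_smul_right, hr, ha])
  obtain ⟨c, hc, habc, -⟩ := exists_norm_eq_one_smul_eq (𝕜 := ℂ) (by omega) ![a, b] 0 (by simp)
  refine ⟨![a, b, c], ?_, !₂[‖u‖, 0, 0], !₂[r, ‖v - (r : ℂ) • a‖, 0], ?_, ?_⟩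
  · simp only [Fin.forall_fin_succ, IsEmpty.forall_iff, and_true, Matrix.cons_val_zero,
      Matrix.cons_val_succ] at hab habc
    simp [orthonormal_vecCons_iff, Fin.forall_fin_succ, ha, hb, hc, hab, habc]
  · simpa [Fin.sum_univ_three] using hua
  · simpa [Fin.sum_univ_three, add_comm, eq_sub_iff_add_eq] using hvb

namespace IsFrameFunction

theorem parallelogram_of_im_inner_eq_zero (h3 : 3 ≤ finrank ℂ H) (hF : IsFrameFunction ℂ F W)
    (hB : ∀ v, |F v| ≤ B * ‖v‖ ^ 2) {u v : H} (huv : (inner ℂ u v).im = 0) :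
    F (u + v) + F (u - v) = 2 * F u + 2 * F v := by
  rcases eq_or_ne u 0 with rfl | hu
  · rw [zero_add, zero_sub, hF.map_neg, hF.map_zero]
    ring
  obtain ⟨a, ha, x, y, rfl, rfl⟩ := exists_orthonormal_real_coords h3 hu huv
  have := hF.parallelogramLaw_of_orthonormal hB ha x y
  simpa [add_smul, sub_smul, Finset.sum_add_distrib] using this

theorem parallelogramLaw_complex (h3 : 3 ≤ finrank ℂ H) (hF : IsFrameFunction ℂ F W)
    (hB : ∀ v, |F v| ≤ B * ‖v‖ ^ 2) : ParallelogramLaw F := fun u v ↦ by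
  have par {u v : H} (huv : (inner ℂ u v).im = 0) :=
    hF.parallelogram_of_im_inner_eq_zero h3 hB huv
  obtain ⟨z, hz, huvz, -⟩ := exists_norm_eq_one_smul_eq (𝕜 := ℂ) (by omega) ![u, v] 0 (by simp)
  obtain ⟨huz, hvz⟩ : inner ℂ u z = 0 ∧ inner ℂ v z = 0 := by
    simpa [Fin.forall_fin_succ] using huvz
  have hzv := inner_eq_zero_symm.1 hvz
  have orth {s : H} (hs : inner ℂ s z = 0) (c : ℂ) :
      F (s + c • z) + F (s - c • z) = 2 * F s + 2 * (‖c‖ ^ 2 * F z) := by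
    rw [← hF.map_smul]
    exact par (by simp [hs])
  -- Adding multiples of the common normal `z` makes the inner product real, and the contributions
  -- of `z` cancel by the parallelogram law in `ℂ`.
  obtain ⟨β, hβ⟩ : ∃ β : ℂ, β.im = -(inner ℂ u v).im := ⟨-(inner ℂ u v), by simp⟩
  have hplus := par (u := u + z) (v := v + β • z) (by simp [huz, hzv, hz, hβ])
  have hminus := par (u := u - z) (v := v - β • z) (by simp [huz, hzv, hz, hβ])
  have hu := orth huz 1
  have hv := orth hvz β
  have hadd := orth (s := u + v) (by rw [inner_add_left, huz, hvz, add_zero]) (1 + β)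
  have hsub := orth (s := u - v) (by rw [inner_sub_left, huz, hvz, sub_zero]) (1 - β)
  rw [one_smul] at hu
  rw [show u + z + (v + β • z) = u + v + (1 + β) • z by module,
    show u + z - (v + β • z) = u - v + (1 - β) • z by module] at hplus
  rw [show u - z + (v - β • z) = u + v - (1 + β) • z by module,
    show u - z - (v - β • z) = u - v - (1 - β) • z by module] at hminus
  linear_combination (hplus + hminus - hadd - hsub) / 2 + hu + hv
    - F z * parallelogram_law_with_norm ℂ 1 β

theorem exists_isPositive (h3 : 3 ≤ finrank ℂ H) (hF : IsFrameFunction ℂ F W)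
    (hF0 : ∀ v, 0 ≤ F v) : ∃ T : H →ₗ[ℂ] H, T.IsPositive ∧ ∀ v, inner ℂ (T v) v = F v := by
  have hB := hF.abs_le_of_nonneg hF0
  obtain ⟨Q, hQ⟩ := (hF.parallelogramLaw_complex h3 hB).exists_quadraticForm hB
  obtain ⟨T, hT⟩ := exists_linearMap_inner_eq_quadraticForm Q fun c v ↦ by
    rw [hQ, hQ, hF.map_smul]
  simp only [hQ] at hT
  exact ⟨T, T.isPositive_iff_complex.2 fun v ↦ by simp [hT, hF0], hT⟩

end IsFrameFunction

end ComplexFrames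

section Matrices

open Module Submodule InnerProductSpace

theorem pairwise_isOrtho_span_singleton {𝕜 E ι : Type*} [RCLike 𝕜] [NormedAddCommGroup E]
    [InnerProductSpace 𝕜 E] {v : ι → E} (hv : Orthonormal 𝕜 v) :
    Pairwise fun i j ↦ (𝕜 ∙ v i) ⟂ (𝕜 ∙ v j) := fun i j hij ↦ by
  simpa [isOrtho_span] using hv.2 hij

variable {N : ℕ}

/-- The matrix of the orthogonal projection onto a subspace `U` of `ℂ^N`. -/
noncomputable def projectionMatrix (U : Submodule ℂ (EuclideanSpace ℂ (Fin N))) :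
    Matrix (Fin N) (Fin N) ℂ :=
  (Matrix.toEuclideanCLM (n := Fin N) (𝕜 := ℂ)).symm U.starProjection

theorem isProjection_iff_isStarProjection_toEuclideanCLM {E : Matrix (Fin N) (Fin N) ℂ} :
    IsProjection E ↔ IsStarProjection (Matrix.toEuclideanCLM (n := Fin N) (𝕜 := ℂ) E) := by
  rw [isStarProjection_iff, IsIdempotentElem, isSelfAdjoint_iff, ← map_mul, ← map_star,
    EmbeddingLike.apply_eq_iff_eq, EmbeddingLike.apply_eq_iff_eq]
  rfl

theorem isProjection_iff_exists_eq_projectionMatrix {E : Matrix (Fin N) (Fin N) ℂ} :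
    IsProjection E ↔ ∃ U, E = projectionMatrix U := by
  let Φ := Matrix.toEuclideanCLM (n := Fin N) (𝕜 := ℂ)
  rw [isProjection_iff_isStarProjection_toEuclideanCLM, isStarProjection_iff_eq_starProjection]
  exact exists_congr fun U ↦
    ⟨fun ⟨_, h⟩ ↦ Φ.toEquiv.eq_symm_apply.2 h, fun h ↦ ⟨inferInstance, Φ.toEquiv.eq_symm_apply.1 h⟩⟩

theorem isProjection_projectionMatrix (U : Submodule ℂ (EuclideanSpace ℂ (Fin N))) :
    IsProjection (projectionMatrix U) :=
  isProjection_iff_exists_eq_projectionMatrix.2 ⟨U, rfl⟩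

theorem projectionMatrix_add_orthogonal (U : Submodule ℂ (EuclideanSpace ℂ (Fin N))) :
    projectionMatrix U + projectionMatrix Uᗮ = 1 := by
  rw [projectionMatrix, projectionMatrix, ← map_add, starProjection_orthogonal,
    add_sub_cancel, ← ContinuousLinearMap.one_def, map_one]

theorem projectionMatrix_mul_of_isOrtho {U V : Submodule ℂ (EuclideanSpace ℂ (Fin N))}
    (h : U ⟂ V) : projectionMatrix U * projectionMatrix V = 0 := by
  rw [projectionMatrix, projectionMatrix, ← map_mul, ContinuousLinearMap.mul_def,
    h.starProjection_comp_starProjection, map_zero]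

theorem projectionMatrix_span_singleton {v : EuclideanSpace ℂ (Fin N)} (hv : ‖v‖ = 1) :
    projectionMatrix (ℂ ∙ v) =
      (Matrix.toEuclideanCLM (n := Fin N) (𝕜 := ℂ)).symm (rankOne ℂ v v) := by
  rw [projectionMatrix]
  congr 1
  ext1 w
  simp [starProjection_unit_singleton ℂ hv]

theorem projectionMatrix_eq_sum {ι : Type*} [Fintype ι]
    {U : Submodule ℂ (EuclideanSpace ℂ (Fin N))} (b : OrthonormalBasis ι ℂ U) :
    projectionMatrix U = ∑ i, projectionMatrix (ℂ ∙ (b i : EuclideanSpace ℂ (Fin N))) := by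
  rw [projectionMatrix, b.starProjection_eq_sum_rankOne, map_sum]
  exact Finset.sum_congr rfl fun i _ ↦ (projectionMatrix_span_singleton (b.norm_eq_one i)).symm

theorem trace_projectionMatrix_span_singleton_mul {v : EuclideanSpace ℂ (Fin N)} (hv : ‖v‖ = 1)
    (A : Matrix (Fin N) (Fin N) ℂ) :
    (projectionMatrix (ℂ ∙ v) * A).trace = inner ℂ v (A.toEuclideanLin v) := by
  have hvv : projectionMatrix (ℂ ∙ v) = Matrix.vecMulVec v (star v) :=
    (projectionMatrix_span_singleton hv).trans (symm_toEuclideanLin_rankOne v v)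
  rw [hvv, Matrix.trace_mul_comm, Matrix.mul_vecMulVec, Matrix.trace_vecMulVec,
    EuclideanSpace.inner_eq_star_dotProduct]
  rfl

/-- Nonnegative functions on the projections of `ℂ^N` with total mass `1` on every finite resolution
of the identity into commuting projections. -/
structure IsProjectionProbability (μ : Matrix (Fin N) (Fin N) ℂ → ℝ) : Prop where
  nonneg : ∀ E, IsProjection E → 0 ≤ μ E
  sum_eq_one_of_commute : ∀ (M : ℕ) (Es : Fin M → Matrix (Fin N) (Fin N) ℂ),
    (∀ i, IsProjection (Es i)) → (∀ i j, Commute (Es i) (Es j)) → ∑ i, Es i = 1 →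
    ∑ i, μ (Es i) = 1

namespace IsProjectionProbability

variable {μ : Matrix (Fin N) (Fin N) ℂ → ℝ} {ι : Type*} [Fintype ι]

theorem sum_eq_one_of_pairwise_isOrtho (hμ : IsProjectionProbability μ)
    {U : ι → Submodule ℂ (EuclideanSpace ℂ (Fin N))} (hU : Pairwise fun i j ↦ U i ⟂ U j)
    (h1 : ∑ i, projectionMatrix (U i) = 1) : ∑ i, μ (projectionMatrix (U i)) = 1 := by
  let e := (Fintype.equivFin ι).symm
  rw [← e.sum_comp] at h1 ⊢
  refine hμ.sum_eq_one_of_commute _ _ (fun i ↦ isProjection_projectionMatrix _) (fun i j ↦ ?_) h1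
  rcases eq_or_ne i j with rfl | hij
  · exact Commute.refl _
  · have h := hU (e.injective.ne hij)
    rw [Commute, SemiconjBy, projectionMatrix_mul_of_isOrtho h,
      projectionMatrix_mul_of_isOrtho h.symm]

theorem map_projectionMatrix (hμ : IsProjectionProbability μ)
    {U : Submodule ℂ (EuclideanSpace ℂ (Fin N))} (b : OrthonormalBasis ι ℂ U) :
    μ (projectionMatrix U) =
      ∑ i, μ (projectionMatrix (ℂ ∙ (b i : EuclideanSpace ℂ (Fin N)))) := by
  have hb : Orthonormal ℂ fun i ↦ (b i : EuclideanSpace ℂ (Fin N)) :=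
    b.orthonormal.comp_linearIsometry U.subtypeₗᵢ
  have hbU (i : ι) : (ℂ ∙ (b i : EuclideanSpace ℂ (Fin N))) ≤ U := by simp
  have hU := hμ.sum_eq_one_of_pairwise_isOrtho (U := fun k : Bool ↦ bif k then U else Uᗮ)
    (by simp [Pairwise, isOrtho_orthogonal_right, isOrtho_orthogonal_left])
    (by simp [projectionMatrix_add_orthogonal])
  have hb' := hμ.sum_eq_one_of_pairwise_isOrtho
    (U := fun k : Option ι ↦ k.elim Uᗮ fun i ↦ ℂ ∙ (b i : EuclideanSpace ℂ (Fin N)))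
    (by
      rintro (- | i) (- | j) hij
      · exact absurd rfl hij
      · exact (isOrtho_orthogonal_left U).mono_right (hbU j)
      · exact (isOrtho_orthogonal_right U).mono_left (hbU i)
      · exact pairwise_isOrtho_span_singleton hb (by simpa using hij))
    (by simp [← projectionMatrix_eq_sum b, add_comm, projectionMatrix_add_orthogonal])
  simp only [Fintype.sum_bool, Fintype.sum_option, cond_true, cond_false, Option.elim] at hU hb'
  linarith

theorem map_one (hμ : IsProjectionProbability μ) : μ 1 = 1 := by
  simpa using hμ.sum_eq_one_of_commute 1 (fun _ ↦ 1)
    (fun _ ↦ ⟨one_mul 1, Matrix.isHermitian_one⟩) (fun _ _ ↦ Commute.refl 1) (by simp)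

theorem isFrameFunction (hμ : IsProjectionProbability μ) :
    IsFrameFunction ℂ (fun v ↦ ‖v‖ ^ 2 * μ (projectionMatrix (ℂ ∙ v))) 1 where
  map_smul c v := by
    rcases eq_or_ne c 0 with rfl | hc
    · simp
    · rw [span_singleton_smul_eq hc.isUnit, norm_smul, mul_pow, mul_assoc]
  sum_eq b := by
    have h := hμ.sum_eq_one_of_pairwise_isOrtho (pairwise_isOrtho_span_singleton b.orthonormal) ?_
    · simpa using h
    · rw [Finset.sum_congr rfl fun i _ ↦ projectionMatrix_span_singleton (b.norm_eq_one i),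
        ← map_sum, b.sum_rankOne_eq_id, ← ContinuousLinearMap.one_def, _root_.map_one]

end IsProjectionProbability

end Matrices

/-- **Gleason's theorem.** For `N ≥ 3`, any nonnegative real-valued function `μ` on the
orthogonal projections of `ℂ^N` which sums to `1` on every complete tuple of pairwise
commuting orthogonal projections is of the form `μ(E) = tr(Eρ)` for a positive semidefinite
Hermitian operator `ρ` with `tr ρ = 1`. -/
theorem gleason (N : ℕ) (hN : 3 ≤ N) (μ : Matrix (Fin N) (Fin N) ℂ → ℝ)
    (hpos : ∀ E : Matrix (Fin N) (Fin N) ℂ, IsProjection E → 0 ≤ μ E)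
    (hsum : ∀ (M : ℕ) (Es : Fin M → Matrix (Fin N) (Fin N) ℂ),
      (∀ i, IsProjection (Es i)) → (∀ i j, Commute (Es i) (Es j)) →
      ∑ i, Es i = 1 → ∑ i, μ (Es i) = 1) :
    ∃ ρ : Matrix (Fin N) (Fin N) ℂ, ρ.PosSemidef ∧ ρ.trace = 1 ∧
      ∀ E : Matrix (Fin N) (Fin N) ℂ, IsProjection E → (E * ρ).trace = (μ E : ℂ) := by
  have hμ : IsProjectionProbability μ := ⟨hpos, hsum⟩
  obtain ⟨T, hT, hTμ⟩ := hμ.isFrameFunction.exists_isPositive (by simpa)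
    fun v ↦ mul_nonneg (sq_nonneg _) (hpos _ (isProjection_projectionMatrix _))
  obtain ⟨ρ, rfl⟩ := Matrix.toEuclideanLin.surjective T
  have htrace {E : Matrix (Fin N) (Fin N) ℂ} (hE : IsProjection E) :
      (E * ρ).trace = (μ E : ℂ) := by
    obtain ⟨U, rfl⟩ := isProjection_iff_exists_eq_projectionMatrix.1 hE
    let b := stdOrthonormalBasis ℂ U
    rw [hμ.map_projectionMatrix b, projectionMatrix_eq_sum b, Finset.sum_mul, Matrix.trace_sum,
      Complex.ofReal_sum]
    refine Finset.sum_congr rfl fun i _ ↦ ?_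
    have hb : ‖(b i : EuclideanSpace ℂ (Fin N))‖ = 1 := b.norm_eq_one i
    rw [trace_projectionMatrix_span_singleton_mul hb, ← hT.isSymmetric, hTμ, hb, one_pow, one_mul]
  refine ⟨ρ, Matrix.isPositive_toEuclideanLin_iff.1 hT, ?_, fun E ↦ htrace⟩
  simpa [hμ.map_one] using htrace (E := 1) ⟨one_mul 1, Matrix.isHermitian_one⟩
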